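/- Let η ≥ 1 and suppose for each k ∈ [K] an index b_k ∈ [K] with b_k ≤ k is given such that det(Λ_h^k) ≤ η · det(Λ_h^{b_k}) for all h ∈ [H] and k ∈ [K]. Then Σ_{k=1}^K Σ_{h=1}^H √(φ_h^{kᵀ} (Λ_h^{b_k})^{−1} φ_h^k) ≤ √(2 η d H T log(T/(dH) + 1)), where T = KH. -/

import Mathlib

open Matrix

/-!
For positive definite `A ≤ B` the adjugates satisfy `adj A ≤ adj B`: a congruence reduces this to
`A = 1`, where every eigenvalue of `adj B` is a product of numbers at least `1`. Since
`adj A = det A • A⁻¹`, using an outdated matrix `A` in place of the current `B` inflates the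
quadratic form of the inverse by at most `det B / det A ≤ η`.

With the current matrices, the matrix determinant lemma and `x / 2 ≤ log (1 + x)` make the sum of
the quadratic forms telescope to twice a log-determinant, which AM-GM on the eigenvalues bounds
through the trace. The Cauchy-Schwarz inequality then brings in the square roots.
-/

section LoewnerOrder

open scoped MatrixOrder ComplexOrder

theorem posDef_of_posDef_of_le {n 𝕜 : Type*} [RCLike 𝕜] {A B : Matrix n n 𝕜} (hA : A.PosDef)
    (hAB : A ≤ B) : B.PosDef := by
  simpa using hA.add_posSemidef (le_iff.1 hAB)

variable {n 𝕜 : Type*} [Fintype n] [DecidableEq n] [RCLike 𝕜] {A B : Matrix n n 𝕜}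

-- Both `A ≤ B` and `B⁻¹ ≤ A⁻¹` say that the block matrix `[B, 1; 1, A⁻¹]` is positive semidefinite.
theorem inv_le_inv_of_posDef (hA : A.PosDef) (hAB : A ≤ B) : B⁻¹ ≤ A⁻¹ := by
  have hB := posDef_of_posDef_of_le hA hAB
  let := hA.inv.isUnit.invertible
  let := hB.isUnit.invertible
  have hblock : (fromBlocks B 1 1ᴴ A⁻¹).PosSemidef :=
    (PosDef.fromBlocks₂₂ B 1 hA.inv).2 <| by
      simpa [nonsing_inv_nonsing_inv _ hA.det_pos.ne'.isUnit] using le_iff.1 hAB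
  simpa [le_iff] using (PosDef.fromBlocks₁₁ 1 A⁻¹ hB).1 hblock

theorem one_le_eigenvalues (hA : A.IsHermitian) (h : 1 ≤ A) (i : n) : 1 ≤ hA.eigenvalues i := by
  refine (CFC.one_le_iff (R := ℝ) A hA).1 h _ ?_
  rw [hA.spectrum_real_eq_range_eigenvalues]
  exact Set.mem_range_self i

theorem adjugate_conjTranspose_mul_self_le (X : Matrix n n 𝕜) (hA : 1 ≤ A.adjugate) :
    (Xᴴ * X).adjugate ≤ (Xᴴ * A * X).adjugate := by
  have hdiff : (Xᴴ * A * X).adjugate - (Xᴴ * X).adjugate =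
      X.adjugate * (A.adjugate - 1) * X.adjugateᴴ := by
    simp only [adjugate_mul_distrib, ← adjugate_conjTranspose, mul_sub, sub_mul, mul_one,
      Matrix.mul_assoc]
  rw [le_iff, hdiff]
  exact (le_iff.1 hA).mul_mul_conjTranspose_same _

theorem one_le_adjugate_diagonal {v : n → 𝕜} (hv : ∀ i, 1 ≤ v i) :
    1 ≤ (diagonal v).adjugate := by
  rw [le_iff, adjugate_diagonal, ← diagonal_one, diagonal_sub]
  exact .diagonal fun i ↦ sub_nonneg.2 (Finset.one_le_prod fun j _ ↦ hv j)

theorem one_le_adjugate (h : 1 ≤ A) : 1 ≤ A.adjugate := by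
  have hA : A.IsHermitian := (posDef_of_posDef_of_le .one h).isHermitian
  set U : Matrix n n 𝕜 := ↑hA.eigenvectorUnitary
  have hU : U * Uᴴ = 1 := Unitary.coe_mul_star_self hA.eigenvectorUnitary
  have hspec : A = U * diagonal (RCLike.ofReal ∘ hA.eigenvalues) * Uᴴ := hA.spectral_theorem
  have hdiag : 1 ≤ (diagonal (RCLike.ofReal ∘ hA.eigenvalues) : Matrix n n 𝕜).adjugate :=
    one_le_adjugate_diagonal fun i ↦ by
      simpa only [Function.comp_apply, RCLike.ofReal_one] using
        RCLike.ofReal_le_ofReal.2 (one_le_eigenvalues hA h i)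
  simpa [hU, ← hspec] using adjugate_conjTranspose_mul_self_le Uᴴ hdiag

theorem adjugate_le_adjugate_of_posDef (hA : A.PosDef) (hAB : A ≤ B) :
    A.adjugate ≤ B.adjugate := by
  obtain ⟨L, hL, rfl⟩ :=
    CStarAlgebra.isStrictlyPositive_iff_eq_star_mul_self.mp hA.isStrictlyPositive
  have hLdet : IsUnit L.det := (isUnit_iff_isUnit_det L).1 hL
  have hLdet' : IsUnit Lᴴ.det := by simpa [det_conjTranspose] using hLdet
  set P := L⁻¹ᴴ * B * L⁻¹
  have hP : 1 ≤ P := by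
    have hdiff : P - 1 = L⁻¹ᴴ * (B - Lᴴ * L) * L⁻¹ := by
      simp [P, mul_sub, sub_mul, conjTranspose_nonsing_inv, Matrix.mul_assoc,
        nonsing_inv_mul_cancel_left _ _ hLdet', mul_nonsing_inv _ hLdet]
    rw [le_iff, hdiff]
    exact (le_iff.1 hAB).conjTranspose_mul_mul_same _
  have hB : B = Lᴴ * P * L := by
    simp [P, conjTranspose_nonsing_inv, Matrix.mul_assoc, nonsing_inv_mul _ hLdet,
      mul_nonsing_inv_cancel_left _ _ hLdet']
  rw [hB]
  exact adjugate_conjTranspose_mul_self_le L (one_le_adjugate hP)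

theorem det_smul_inv_le_det_smul_inv_of_posDef (hA : A.PosDef) (hAB : A ≤ B) :
    A.det • A⁻¹ ≤ B.det • B⁻¹ := by
  have hB := posDef_of_posDef_of_le hA hAB
  simpa [inv_def, smul_smul, hA.det_pos.ne', hB.det_pos.ne'] using
    adjugate_le_adjugate_of_posDef hA hAB

end LoewnerOrder

section QuadraticForm

open scoped MatrixOrder

variable {n : Type*} [Fintype n] {A B : Matrix n n ℝ}

theorem dotProduct_mulVec_le_dotProduct_mulVec (hAB : A ≤ B) (x : n → ℝ) :
    x ⬝ᵥ A *ᵥ x ≤ x ⬝ᵥ B *ᵥ x := by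
  simpa [sub_mulVec] using (le_iff.1 hAB).dotProduct_mulVec_nonneg x

variable [DecidableEq n]

theorem dotProduct_inv_mulVec_nonneg (hA : A.PosSemidef) (x : n → ℝ) : 0 ≤ x ⬝ᵥ A⁻¹ *ᵥ x := by
  simpa using hA.inv.dotProduct_mulVec_nonneg x

theorem dotProduct_inv_mulVec_le_of_det_le {η : ℝ} (hA : A.PosDef) (hAB : A ≤ B)
    (hdet : B.det ≤ η * A.det) (x : n → ℝ) : x ⬝ᵥ A⁻¹ *ᵥ x ≤ η * (x ⬝ᵥ B⁻¹ *ᵥ x) := by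
  have hB := posDef_of_posDef_of_le hA hAB
  refine le_of_mul_le_mul_left ?_ hA.det_pos
  calc A.det * (x ⬝ᵥ A⁻¹ *ᵥ x)
      ≤ B.det * (x ⬝ᵥ B⁻¹ *ᵥ x) := by
        simpa [smul_mulVec] using dotProduct_mulVec_le_dotProduct_mulVec
          (det_smul_inv_le_det_smul_inv_of_posDef hA hAB) x
    _ ≤ η * A.det * (x ⬝ᵥ B⁻¹ *ᵥ x) :=
        mul_le_mul_of_nonneg_right hdet (dotProduct_inv_mulVec_nonneg hB.posSemidef x)
    _ = A.det * (η * (x ⬝ᵥ B⁻¹ *ᵥ x)) := by ring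

end QuadraticForm

section Determinant

variable {n : Type*} [Fintype n] [DecidableEq n]

theorem det_add_vecMulVec {R : Type*} [CommRing R] {A : Matrix n n R} (hA : IsUnit A.det)
    (u v : n → R) :
    (A + vecMulVec u v).det = A.det * (1 + v ⬝ᵥ A⁻¹ *ᵥ u) := by
  rw [vecMulVec_eq Unit, det_add_replicateCol_mul_replicateRow hA, Matrix.mul_assoc,
    ← replicateCol_mulVec, det_unique (n := Unit)]
  simp [replicateRow_mul_replicateCol_apply]

theorem log_det_le_card_mul_log_trace_div_card [Nonempty n] {A : Matrix n n ℝ}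
    (hA : A.PosDef) :
    Real.log A.det ≤ Fintype.card n * Real.log (A.trace / Fintype.card n) := by
  set d : ℝ := (Fintype.card n : ℝ)
  have hd : 0 < d := by simp [d, Fintype.card_pos]
  have hdet : Real.log A.det = ∑ i, Real.log (hA.1.eigenvalues i) := by
    rw [hA.1.det_eq_prod_eigenvalues]
    exact Real.log_prod fun i _ ↦ (hA.eigenvalues_pos i).ne'
  have htrace : A.trace = ∑ i, hA.1.eigenvalues i := hA.1.trace_eq_sum_eigenvalues
  have hjensen := strictConcaveOn_log_Ioi.concaveOn.le_map_sum (t := Finset.univ)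
    (w := fun _ : n ↦ d⁻¹) (p := hA.1.eigenvalues) (fun _ _ ↦ by positivity)
    (by simp [d]) fun i _ ↦ hA.eigenvalues_pos i
  simp only [smul_eq_mul, ← Finset.mul_sum, ← hdet, ← htrace] at hjensen
  rwa [inv_mul_le_iff₀ hd, inv_mul_eq_div] at hjensen

end Determinant

theorem half_le_log_one_add {x : ℝ} (hx₀ : 0 ≤ x) (hx₁ : x ≤ 2) : x / 2 ≤ Real.log (1 + x) := by
  refine le_trans ?_ (Real.le_log_one_add_of_nonneg hx₀)
  rw [div_le_div_iff₀ two_pos (by positivity)]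
  nlinarith

theorem sum_sqrt_le_sqrt_card_mul_sum {ι : Type*} (s : Finset ι) {f : ι → ℝ}
    (hf : ∀ i ∈ s, 0 ≤ f i) : ∑ i ∈ s, √(f i) ≤ √(s.card * ∑ i ∈ s, f i) := by
  refine Real.le_sqrt_of_sq_le (sq_sum_le_card_mul_sum_sq.trans_eq ?_)
  congr 1
  exact Finset.sum_congr rfl fun i hi ↦ Real.sq_sqrt (hf i hi)

theorem sum_sum_sqrt_le_of_sum_le {ι κ : Type*} (s : Finset ι) (t : Finset κ) {f : ι → κ → ℝ}
    {C : ℝ} (hf : ∀ i ∈ s, ∀ j ∈ t, 0 ≤ f i j) (hC : ∀ j ∈ t, ∑ i ∈ s, f i j ≤ C) :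
    ∑ i ∈ s, ∑ j ∈ t, √(f i j) ≤ √(s.card * t.card * (t.card * C)) := by
  have hnonneg : ∀ p ∈ s ×ˢ t, 0 ≤ f p.1 p.2 := fun p hp ↦
    hf p.1 (Finset.mem_product.1 hp).1 p.2 (Finset.mem_product.1 hp).2
  have htotal : ∑ p ∈ s ×ˢ t, f p.1 p.2 ≤ t.card * C := by
    rw [Finset.sum_product_right, ← nsmul_eq_mul]
    exact Finset.sum_le_card_nsmul t _ C hC
  rw [← Finset.sum_product']
  refine (sum_sqrt_le_sqrt_card_mul_sum _ hnonneg).trans (Real.sqrt_le_sqrt ?_)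
  rw [Finset.card_product, Nat.cast_mul]
  gcongr

section RegularizedGram

open scoped MatrixOrder

/-- The Gram matrix `Λ₀ + ∑ i ∈ s, φ i (φ i)ᵀ` of the features `φ` observed at the indices in `s`,
with regularizer `Λ₀`. Indexing by a finite set of observations, rather than by a time, makes
it monotone in `s`; the matrix `Λ_h^k` of the paper has `Λ₀ = 1` and `s = {1, …, k - 1}`. -/
def regularizedGram {n ι : Type*} (Λ₀ : Matrix n n ℝ) (φ : ι → n → ℝ) (s : Finset ι) :
    Matrix n n ℝ :=
  Λ₀ + ∑ i ∈ s, vecMulVec (φ i) (φ i)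

variable {n ι : Type*} {Λ₀ : Matrix n n ℝ} {φ : ι → n → ℝ} {s : Finset ι}

section Finite

variable [Finite n]

theorem regularizedGram_mono (Λ₀ : Matrix n n ℝ) (φ : ι → n → ℝ) :
    Monotone (regularizedGram Λ₀ φ) := fun s t hst ↦ by
  refine add_le_add_right (Finset.sum_le_sum_of_subset_of_nonneg hst fun i _ _ ↦ ?_) Λ₀
  simpa [nonneg_iff_posSemidef] using posSemidef_vecMulVec_self_star (φ i)

theorem le_regularizedGram (Λ₀ : Matrix n n ℝ) (φ : ι → n → ℝ) (s : Finset ι) :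
    Λ₀ ≤ regularizedGram Λ₀ φ s := by
  simpa [regularizedGram] using regularizedGram_mono Λ₀ φ s.empty_subset

theorem regularizedGram_posDef (hΛ₀ : Λ₀.PosDef) (φ : ι → n → ℝ) (s : Finset ι) :
    (regularizedGram Λ₀ φ s).PosDef :=
  posDef_of_posDef_of_le hΛ₀ (le_regularizedGram Λ₀ φ s)

end Finite

variable [Fintype n]

theorem trace_regularizedGram (Λ₀ : Matrix n n ℝ) (φ : ι → n → ℝ) (s : Finset ι) :
    (regularizedGram Λ₀ φ s).trace = Λ₀.trace + ∑ i ∈ s, φ i ⬝ᵥ φ i := by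
  simp [regularizedGram, trace_sum, trace_vecMulVec]

variable [DecidableEq n]

theorem det_regularizedGram_insert [DecidableEq ι] (hΛ₀ : Λ₀.PosDef) (φ : ι → n → ℝ)
    {a : ι} (ha : a ∉ s) :
    (regularizedGram Λ₀ φ (insert a s)).det =
      (regularizedGram Λ₀ φ s).det * (1 + φ a ⬝ᵥ (regularizedGram Λ₀ φ s)⁻¹ *ᵥ φ a) := by
  rw [← det_add_vecMulVec (regularizedGram_posDef hΛ₀ φ s).det_pos.ne'.isUnit, regularizedGram,
    Finset.sum_insert ha, add_comm (vecMulVec _ _), ← add_assoc, regularizedGram]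

theorem log_det_regularizedGram_one_le [Nonempty n] (hφ : ∀ i ∈ s, φ i ⬝ᵥ φ i ≤ 1) :
    Real.log (regularizedGram 1 φ s).det ≤
      Fintype.card n * Real.log (s.card / Fintype.card n + 1) := by
  have hpos := regularizedGram_posDef (.one : (1 : Matrix n n ℝ).PosDef) φ s
  refine (log_det_le_card_mul_log_trace_div_card hpos).trans ?_
  have htrace : (regularizedGram 1 φ s).trace ≤ Fintype.card n + s.card := by
    simpa [trace_regularizedGram] using Finset.sum_le_card_nsmul s _ 1 hφ
  have := hpos.trace_pos
  rw [div_add_one (by positivity), add_comm (s.card : ℝ)]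
  gcongr

variable [LinearOrder ι]

/-- Elliptical potential lemma. -/
theorem sum_dotProduct_inv_regularizedGram_mulVec_le (hΛ₀ : Λ₀.PosDef)
    (hφ : ∀ k ∈ s, φ k ⬝ᵥ Λ₀⁻¹ *ᵥ φ k ≤ 1) :
    ∑ k ∈ s, φ k ⬝ᵥ (regularizedGram Λ₀ φ {i ∈ s | i < k})⁻¹ *ᵥ φ k ≤
      2 * Real.log ((regularizedGram Λ₀ φ s).det / Λ₀.det) := by
  induction s using Finset.induction_on_max with
  | empty => simp [regularizedGram, hΛ₀.det_pos.ne']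
  | insert a s hlt ih =>
    have ha : a ∉ s := fun h ↦ (hlt a h).false
    have hpast_self : {i ∈ insert a s | i < a} = s := by grind
    have hpast : ∀ k ∈ s, {i ∈ insert a s | i < k} = {i ∈ s | i < k} := by grind
    have hquad := dotProduct_inv_mulVec_nonneg (regularizedGram_posDef hΛ₀ φ s).posSemidef (φ a)
    have hle : φ a ⬝ᵥ (regularizedGram Λ₀ φ s)⁻¹ *ᵥ φ a ≤ 1 :=
      (dotProduct_mulVec_le_dotProduct_mulVec
        (inv_le_inv_of_posDef hΛ₀ (le_regularizedGram Λ₀ φ s)) _).trans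
        (hφ a (Finset.mem_insert_self a s))
    have hlog := half_le_log_one_add hquad (hle.trans one_le_two)
    rw [Finset.sum_insert ha, hpast_self, Finset.sum_congr rfl fun k hk ↦ by rw [hpast k hk],
      det_regularizedGram_insert hΛ₀ φ ha, mul_div_right_comm,
      Real.log_mul (div_pos (regularizedGram_posDef hΛ₀ φ s).det_pos hΛ₀.det_pos).ne'
        (by positivity)]
    linarith [ih fun k hk ↦ hφ k (Finset.mem_insert_of_mem hk)]

theorem sum_dotProduct_inv_regularizedGram_mulVec_le_of_det_le (hΛ₀ : Λ₀.PosDef)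
    (hφ : ∀ k ∈ s, φ k ⬝ᵥ Λ₀⁻¹ *ᵥ φ k ≤ 1) {η : ℝ} (hη : 0 ≤ η) {b : ι → Finset ι}
    (hb : ∀ k ∈ s, b k ⊆ {i ∈ s | i < k})
    (hdet : ∀ k ∈ s, (regularizedGram Λ₀ φ {i ∈ s | i < k}).det ≤
      η * (regularizedGram Λ₀ φ (b k)).det) :
    ∑ k ∈ s, φ k ⬝ᵥ (regularizedGram Λ₀ φ (b k))⁻¹ *ᵥ φ k ≤
      η * (2 * Real.log ((regularizedGram Λ₀ φ s).det / Λ₀.det)) :=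
  calc ∑ k ∈ s, φ k ⬝ᵥ (regularizedGram Λ₀ φ (b k))⁻¹ *ᵥ φ k
      ≤ ∑ k ∈ s, η * (φ k ⬝ᵥ (regularizedGram Λ₀ φ {i ∈ s | i < k})⁻¹ *ᵥ φ k) :=
        Finset.sum_le_sum fun k hk ↦ dotProduct_inv_mulVec_le_of_det_le
          (regularizedGram_posDef hΛ₀ φ (b k)) (regularizedGram_mono Λ₀ φ (hb k hk)) (hdet k hk) _
    _ = η * ∑ k ∈ s, φ k ⬝ᵥ (regularizedGram Λ₀ φ {i ∈ s | i < k})⁻¹ *ᵥ φ k :=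
        (Finset.mul_sum ..).symm
    _ ≤ η * (2 * Real.log ((regularizedGram Λ₀ φ s).det / Λ₀.det)) :=
        mul_le_mul_of_nonneg_left (sum_dotProduct_inv_regularizedGram_mulVec_le hΛ₀ hφ) hη

theorem sum_dotProduct_inv_regularizedGram_one_mulVec_le_of_det_le [Nonempty n]
    (hφ : ∀ k ∈ s, φ k ⬝ᵥ φ k ≤ 1) {η : ℝ} (hη : 0 ≤ η) {b : ι → Finset ι}
    (hb : ∀ k ∈ s, b k ⊆ {i ∈ s | i < k})
    (hdet : ∀ k ∈ s, (regularizedGram 1 φ {i ∈ s | i < k}).det ≤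
      η * (regularizedGram 1 φ (b k)).det) :
    ∑ k ∈ s, φ k ⬝ᵥ (regularizedGram 1 φ (b k))⁻¹ *ᵥ φ k ≤
      2 * η * Fintype.card n * Real.log (s.card / Fintype.card n + 1) := by
  have hsum := sum_dotProduct_inv_regularizedGram_mulVec_le_of_det_le .one (by simpa using hφ)
    hη hb hdet
  have hlog := mul_le_mul_of_nonneg_left (log_det_regularizedGram_one_le hφ) hη
  rw [det_one, div_one] at hsum
  linarith

end RegularizedGram

/-- Let `η ≥ 1` and suppose for each `k ∈ [K]` an index
`b_k ∈ [K]` with `b_k ≤ k` is given such that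
`det(Λ_h^k) ≤ η · det(Λ_h^{b_k})` for all `h ∈ [H]`, `k ∈ [K]`. Then
`∑_{k=1}^K ∑_{h=1}^H √(φ_h^kᵀ (Λ_h^{b_k})⁻¹ φ_h^k)
  ≤ √(2 η d H T log(T/(dH)+1))`, where `T = KH`. -/
theorem stmt_13 (d H K : ℕ) (hd : 1 ≤ d) (hH : 1 ≤ H) (hK : 1 ≤ K)
    (φ : ℕ → ℕ → Fin d → ℝ)
    (hφ : ∀ h ∈ Finset.Icc 1 H, ∀ k ∈ Finset.Icc 1 K,
      Real.sqrt (φ h k ⬝ᵥ φ h k) ≤ 1)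
    (Λ : ℕ → ℕ → Matrix (Fin d) (Fin d) ℝ)
    (hΛ : ∀ h k, Λ h k = (1 : Matrix (Fin d) (Fin d) ℝ) +
      ∑ τ ∈ Finset.Icc 1 (k - 1), Matrix.vecMulVec (φ h τ) (φ h τ))
    (η : ℝ) (hη : 1 ≤ η)
    (bk : ℕ → ℕ)
    (hbk : ∀ k ∈ Finset.Icc 1 K, bk k ∈ Finset.Icc 1 K ∧ bk k ≤ k)
    (hdet : ∀ h ∈ Finset.Icc 1 H, ∀ k ∈ Finset.Icc 1 K,
      (Λ h k).det ≤ η * (Λ h (bk k)).det)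
    (T : ℕ) (hT : T = K * H) :
    ∑ k ∈ Finset.Icc 1 K, ∑ h ∈ Finset.Icc 1 H,
        Real.sqrt (φ h k ⬝ᵥ (Λ h (bk k))⁻¹.mulVec (φ h k))
      ≤ Real.sqrt (2 * η * d * H * T * Real.log ((T : ℝ) / (d * H) + 1)) := by
  have : NeZero d := ⟨by omega⟩
  have hnorm : ∀ h ∈ Finset.Icc 1 H, ∀ k ∈ Finset.Icc 1 K, φ h k ⬝ᵥ φ h k ≤ 1 :=
    fun h hh k hk ↦ Real.sqrt_le_one.1 (hφ h hh k hk)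
  have hgram : ∀ h k, Λ h k = regularizedGram 1 (φ h) (Finset.Icc 1 (k - 1)) := hΛ
  have hpast : ∀ k ∈ Finset.Icc 1 K, {i ∈ Finset.Icc 1 K | i < k} = Finset.Icc 1 (k - 1) := by
    grind
  have hnonneg : ∀ h k, 0 ≤ φ h k ⬝ᵥ (Λ h (bk k))⁻¹ *ᵥ φ h k := fun h k ↦ by
    rw [hgram]
    exact dotProduct_inv_mulVec_nonneg (regularizedGram_posDef .one _ _).posSemidef _
  have hstage : ∀ h ∈ Finset.Icc 1 H, ∑ k ∈ Finset.Icc 1 K, φ h k ⬝ᵥ (Λ h (bk k))⁻¹ *ᵥ φ h k ≤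
      2 * η * d * Real.log (K / d + 1) := fun h hh ↦ by
    simpa [hgram] using sum_dotProduct_inv_regularizedGram_one_mulVec_le_of_det_le
      (b := fun k ↦ Finset.Icc 1 (bk k - 1)) (hnorm h hh) (zero_le_one.trans hη)
      (fun k hk ↦ by grind) (fun k hk ↦ by simpa only [hpast k hk, hgram] using hdet h hh k hk)
  have hratio : (T : ℝ) / (d * H) = K / d := by
    rw [hT, Nat.cast_mul, mul_div_mul_right _ _ (by positivity)]
  refine (sum_sum_sqrt_le_of_sum_le _ _ (fun k _ h _ ↦ hnonneg h k) hstage).trans_eq ?_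
  rw [hratio, Nat.card_Icc, Nat.card_Icc, Nat.add_sub_cancel, Nat.add_sub_cancel, hT, Nat.cast_mul]
  ring_nf
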